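/- arXiv:1211.0414 — 3 statements merged into one kernel-verified Lean document; each statement's English description precedes it below -/
import Mathlib

section
/- Let (H,d) be a Hadamard space and let f : H → (−∞,∞] and f^n : H → (−∞,∞] (n ∈ ℕ) be proper convex lower semicontinuous functions, with resolvents J_λ, J^n_λ and gradient flow semigroups (S_t)_{t>0}, (S^n_t)_{t>0}. If for every x in the closure of dom f and every λ > 0 one has J^n_λ x → J_λ x as n → ∞, then S^n_t x → S_t x as n → ∞, for every x in the closure of dom f and every t > 0. -/
open Filter Topology
open scoped Classical

/-- `γ`, restricted to `[0,1]`, is an affinely parametrized geodesic. -/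
def IsGeodesic {H : Type*} [MetricSpace H] (γ : ℝ → H) : Prop :=
  ∀ s ∈ Set.Icc (0:ℝ) 1, ∀ t ∈ Set.Icc (0:ℝ) 1,
    dist (γ s) (γ t) = |s - t| * dist (γ 0) (γ 1)

/-- A Hadamard space: a complete geodesic metric space satisfying the CAT(0) inequality. -/
structure HadamardSpace (H : Type*) [MetricSpace H] [CompleteSpace H] : Prop where
  geodesic : ∀ x y : H, ∃ γ : ℝ → H, IsGeodesic γ ∧ γ 0 = x ∧ γ 1 = y
  cat0 : ∀ (x : H) (γ : ℝ → H), IsGeodesic γ → ∀ t ∈ Set.Icc (0:ℝ) 1,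
      dist x (γ t) ^ 2 ≤ (1 - t) * dist x (γ 0) ^ 2 + t * dist x (γ 1) ^ 2
        - t * (1 - t) * dist (γ 0) (γ 1) ^ 2

/-- A set is (geodesically) convex if it contains every geodesic segment between its points. -/
def GeodesicConvex {H : Type*} [MetricSpace H] (C : Set H) : Prop :=
  ∀ γ : ℝ → H, IsGeodesic γ → γ 0 ∈ C → γ 1 ∈ C → ∀ t ∈ Set.Icc (0:ℝ) 1, γ t ∈ C

/-- A function `f : H → (−∞,∞]` is convex if it is convex along every geodesic. -/
def ConvexFun {H : Type*} [MetricSpace H] (f : H → EReal) : Prop :=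
  ∀ γ : ℝ → H, IsGeodesic γ → ∀ t ∈ Set.Icc (0:ℝ) 1,
    f (γ t) ≤ ((1 - t : ℝ) : EReal) * f (γ 0) + ((t : ℝ) : EReal) * f (γ 1)

/-- `f` is strongly convex with parameter `β > 0`. -/
def StronglyConvexWith {H : Type*} [MetricSpace H] (β : ℝ) (f : H → EReal) : Prop :=
  ∀ γ : ℝ → H, IsGeodesic γ → ∀ t ∈ Set.Icc (0:ℝ) 1,
    f (γ t) ≤ ((1 - t : ℝ) : EReal) * f (γ 0) + ((t : ℝ) : EReal) * f (γ 1)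
      - ((β * (t * (1 - t)) * dist (γ 0) (γ 1) ^ 2 : ℝ) : EReal)

/-- `f : H → (−∞,∞]` is proper (not identically `∞`, never `−∞`), convex and lsc. -/
def ProperConvexLsc {H : Type*} [MetricSpace H] (f : H → EReal) : Prop :=
  (∃ x, f x ≠ ⊤) ∧ (∀ x, f x ≠ ⊥) ∧ ConvexFun f ∧ LowerSemicontinuous f

/-- `c` is an asymptotic center of the (bounded) sequence `x`:
it minimizes `y ↦ limsup_n d(y, x_n)²`. -/
def IsAsymptoticCenter {H : Type*} [MetricSpace H] (x : ℕ → H) (c : H) : Prop :=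
  ∀ y : H, limsup (fun n => dist c (x n) ^ 2) atTop ≤ limsup (fun n => dist y (x n) ^ 2) atTop

/-- `x` weakly converges to `c` if `c` is the asymptotic center of every subsequence of `x`. -/
def WeakConvSeq {H : Type*} [MetricSpace H] (x : ℕ → H) (c : H) : Prop :=
  ∀ φ : ℕ → ℕ, StrictMono φ → IsAsymptoticCenter (x ∘ φ) c

/-- Mosco convergence of `fn` to `f`. -/
def MoscoConv {H : Type*} [MetricSpace H] (fn : ℕ → H → EReal) (f : H → EReal) : Prop :=
  (∀ (x : H) (xs : ℕ → H), Bornology.IsBounded (Set.range xs) → WeakConvSeq xs x →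
      f x ≤ liminf (fun n => fn n (xs n)) atTop) ∧
  (∀ x : H, ∃ ys : ℕ → H, Tendsto ys atTop (𝓝 x) ∧
      Tendsto (fun n => fn n (ys n)) atTop (𝓝 (f x)))

/-- `p` is the resolvent `J_λ x` of `f` at `x`: it minimizes `y ↦ f(y) + d(x,y)²/(2λ)`. -/
def IsResolventPt {H : Type*} [MetricSpace H] (f : H → EReal) (lam : ℝ) (x p : H) : Prop :=
  ∀ y : H, f p + ((dist x p ^ 2 / (2 * lam) : ℝ) : EReal)
    ≤ f y + ((dist x y ^ 2 / (2 * lam) : ℝ) : EReal)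

/-- The Moreau–Yosida envelope `f_λ(x) = inf_y [f(y) + d(x,y)²/(2λ)]`. -/
noncomputable def MoreauEnv {H : Type*} [MetricSpace H] (f : H → EReal) (lam : ℝ) (x : H) :
    EReal :=
  ⨅ y : H, f y + ((dist x y ^ 2 / (2 * lam) : ℝ) : EReal)

/-- `p` is the metric projection of `x` onto `C`. -/
def IsProjPt {H : Type*} [MetricSpace H] (C : Set H) (x p : H) : Prop :=
  p ∈ C ∧ ∀ c ∈ C, dist x p ≤ dist x c

/-- The indicator function of a set, with values in `(−∞,∞]`. -/
noncomputable def indicatorE {H : Type*} (C : Set H) : H → EReal :=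
  fun x => if x ∈ C then (0 : EReal) else ⊤

/-- `y = S_t x` is the gradient-flow semigroup value:
the limit of the iterated resolvents `(J_{t/n})^{(n)} x`. -/
def IsGradientFlowPt {H : Type*} [MetricSpace H] (J : ℝ → H → H) (t : ℝ) (x y : H) : Prop :=
  Tendsto (fun n : ℕ => (J (t / (n : ℝ)))^[n] x) atTop (𝓝 y)

/-!
The resolvents of a convex function on a Hadamard space satisfy a discrete evolution variational
inequality (EVI). Applying it twice compares any two resolvent steps, and iterating that comparison
in the manner of Crandall and Liggett gives
`d((J_{t/m})^m x, (J_{t/k})^k x) ≤ 3 d(x, J_r x)` whenever `m ≤ k` and `r = t √(2/m)`.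
The right-hand side involves a single resolvent, so for `x` in the closure of the domain the
approximations `(J^n_{t/m})^m x` of `S^n_t x` are controlled uniformly in large `n`, and the limits
in `m` and `n` may be interchanged. Since `x` may lie outside the closure of `dom f^n`, the flow
`S^n_t x` is obtained there as the flow of `lim_{λ → 0} J^n_λ x`.
-/

section Nonexpansive

variable {α : Type*} [PseudoMetricSpace α]

theorem dist_iterate_le_of_lipschitzWith_one {T : α → α} (hT : LipschitzWith 1 T) (m : ℕ)
    (x y : α) : dist (T^[m] x) (T^[m] y) ≤ dist x y := by
  simpa using (hT.iterate m).dist_le_mul x y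

theorem dist_self_iterate_le_of_lipschitzWith_one {T : α → α} (hT : LipschitzWith 1 T) (m : ℕ)
    (x : α) : dist x (T^[m] x) ≤ m * dist x (T x) := by
  simpa using dist_le_range_sum_of_dist_le (f := fun i => T^[i] x) (d := fun _ => dist x (T x)) m
    fun {i} _ => by simpa using hT.dist_iterate_succ_le_geometric x i

theorem tendsto_iterate_of_lipschitzWith_one {ι : Type*} {l : Filter ι} {T : α → α}
    {Tn : ι → α → α} (hTn : ∀ n, LipschitzWith 1 (Tn n)) {s : Set α} (hs : Set.MapsTo T s s)
    (hlim : ∀ x ∈ s, Tendsto (fun n => Tn n x) l (𝓝 (T x))) {x : α} (hx : x ∈ s) (m : ℕ) :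
    Tendsto (fun n => (Tn n)^[m] x) l (𝓝 (T^[m] x)) := by
  induction m with
  | zero => exact tendsto_const_nhds
  | succ m ih =>
    simp only [Function.iterate_succ_apply']
    have hstep := hlim _ (hs.iterate m hx)
    rw [tendsto_iff_dist_tendsto_zero] at ih hstep ⊢
    refine squeeze_zero (fun _ => dist_nonneg) (fun n => ?_) (add_zero (0 : ℝ) ▸ ih.add hstep)
    calc dist (Tn n ((Tn n)^[m] x)) (T (T^[m] x))
        ≤ dist (Tn n ((Tn n)^[m] x)) (Tn n (T^[m] x)) + dist (Tn n (T^[m] x)) (T (T^[m] x)) :=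
          dist_triangle _ _ _
      _ ≤ dist ((Tn n)^[m] x) (T^[m] x) + dist (Tn n (T^[m] x)) (T (T^[m] x)) := by
          gcongr
          simpa using (hTn n).dist_le_mul ((Tn n)^[m] x) (T^[m] x)

end Nonexpansive

/-- The four-point inequality bounding the squared diagonals of a quadrilateral by its squared
sides. Among geodesic spaces it characterizes the CAT(0) ones (Berg–Nikolaev), but it makes no
reference to geodesics. -/
def QuadrilateralInequality (H : Type*) [PseudoMetricSpace H] : Prop :=
  ∀ x y p q : H,
    dist x q ^ 2 + dist y p ^ 2 ≤ dist x p ^ 2 + dist y q ^ 2 + dist x y ^ 2 + dist p q ^ 2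

theorem HadamardSpace.quadrilateralInequality {H : Type*} [MetricSpace H] [CompleteSpace H]
    (hH : HadamardSpace H) : QuadrilateralInequality H := by
  intro x y p q
  obtain ⟨γ, hγ, rfl, rfl⟩ := hH.geodesic x q
  have hmid : (1 / 2 : ℝ) ∈ Set.Icc (0 : ℝ) 1 := by norm_num
  have hy := hH.cat0 y γ hγ _ hmid
  have hp := hH.cat0 p γ hγ _ hmid
  have hyp : dist y p ^ 2 ≤ 2 * (dist y (γ (1 / 2)) ^ 2 + dist p (γ (1 / 2)) ^ 2) :=
    (pow_le_pow_left₀ dist_nonneg (dist_triangle_right _ _ _) 2).trans add_sq_le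
  rw [dist_comm y (γ 0)] at hy
  rw [dist_comm p (γ 0)] at hp
  linarith

section Resolvent

variable {H : Type*} [MetricSpace H] {f : H → EReal} {lam : ℝ} {x p z : H}

theorem ConvexFun.le_coe_toReal (hconv : ConvexFun f) (hbot : ∀ y, f y ≠ ⊥) {γ : ℝ → H}
    (hγ : IsGeodesic γ) (h0 : f (γ 0) ≠ ⊤) (h1 : f (γ 1) ≠ ⊤) {t : ℝ}
    (ht : t ∈ Set.Icc (0 : ℝ) 1) :
    f (γ t) ≤ (((1 - t) * (f (γ 0)).toReal + t * (f (γ 1)).toReal : ℝ) : EReal) := by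
  have hle := hconv γ hγ t ht
  rw [← EReal.coe_toReal h0 (hbot _), ← EReal.coe_toReal h1 (hbot _)] at hle
  exact_mod_cast hle

theorem IsResolventPt.ne_top (hp : IsResolventPt f lam x p) (hz : f z ≠ ⊤) : f p ≠ ⊤ := by
  intro htop
  have hle := hp z
  rw [htop, EReal.top_add_coe, top_le_iff] at hle
  exact EReal.add_ne_top hz (EReal.coe_ne_top _) hle

variable [CompleteSpace H]

theorem IsResolventPt.evi_of_mem_Ioc (hH : HadamardSpace H) (hbot : ∀ y, f y ≠ ⊥)
    (hconv : ConvexFun f) (hlam : 0 < lam) (hp : IsResolventPt f lam x p) (hz : f z ≠ ⊤) {t : ℝ}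
    (ht : t ∈ Set.Ioc (0 : ℝ) 1) :
    2 * lam * ((f p).toReal - (f z).toReal) ≤
      dist x z ^ 2 - dist x p ^ 2 - (1 - t) * dist p z ^ 2 := by
  have hp_top := hp.ne_top hz
  obtain ⟨γ, hγ, rfl, rfl⟩ := hH.geodesic p z
  have htIcc := Set.Ioc_subset_Icc_self ht
  have hcat := hH.cat0 x γ hγ t htIcc
  have hmin : (f (γ 0)).toReal + dist x (γ 0) ^ 2 / (2 * lam) ≤
      (1 - t) * (f (γ 0)).toReal + t * (f (γ 1)).toReal + dist x (γ t) ^ 2 / (2 * lam) := by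
    have hle := (hp (γ t)).trans
      (add_le_add_left (hconv.le_coe_toReal hbot hγ hp_top hz htIcc) _)
    rw [← EReal.coe_toReal hp_top (hbot _)] at hle
    exact_mod_cast hle
  have hdecrease : t * (2 * lam * ((f (γ 0)).toReal - (f (γ 1)).toReal)) ≤
      dist x (γ t) ^ 2 - dist x (γ 0) ^ 2 := by
    have hscaled := mul_le_mul_of_nonneg_left hmin (by positivity : 0 ≤ 2 * lam)
    field_simp at hscaled
    linarith
  refine le_of_mul_le_mul_left ?_ ht.1
  linarith

theorem IsResolventPt.evi (hH : HadamardSpace H) (hbot : ∀ y, f y ≠ ⊥) (hconv : ConvexFun f)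
    (hlam : 0 < lam) (hp : IsResolventPt f lam x p) (hz : f z ≠ ⊤) :
    2 * lam * ((f p).toReal - (f z).toReal) ≤ dist x z ^ 2 - dist x p ^ 2 - dist p z ^ 2 := by
  have hlim : Tendsto (fun t : ℝ => dist x z ^ 2 - dist x p ^ 2 - (1 - t) * dist p z ^ 2) (𝓝[>] 0)
      (𝓝 (dist x z ^ 2 - dist x p ^ 2 - (1 - 0) * dist p z ^ 2)) :=
    (Continuous.tendsto (by fun_prop) 0).mono_left nhdsWithin_le_nhds
  rw [sub_zero, one_mul] at hlim
  refine ge_of_tendsto hlim ?_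
  filter_upwards [Ioc_mem_nhdsGT zero_lt_one] with t ht
  exact hp.evi_of_mem_Ioc hH hbot hconv hlam hz ht

end Resolvent

/-- `J` maps into `D` and satisfies the discrete evolution variational inequality of the function
`g` on `D`. For the resolvents of `f : H → (−∞,∞]`, the set `D` is `dom f` and `g` agrees with `f`
on `D`, so that the inequality can be stated in `ℝ`. -/
structure IsEVIResolvent {H : Type*} [PseudoMetricSpace H] (D : Set H) (g : H → ℝ)
    (J : ℝ → H → H) : Prop where
  mem : ∀ lam > (0 : ℝ), ∀ x, J lam x ∈ D
  evi : ∀ lam > (0 : ℝ), ∀ x, ∀ z ∈ D,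
    2 * lam * (g (J lam x) - g z) ≤ dist x z ^ 2 - dist x (J lam x) ^ 2 - dist (J lam x) z ^ 2

theorem ConvexFun.isEVIResolvent {H : Type*} [MetricSpace H] [CompleteSpace H]
    (hH : HadamardSpace H) {f : H → EReal} (hconv : ConvexFun f) (hdom : ∃ x, f x ≠ ⊤)
    (hbot : ∀ x, f x ≠ ⊥) {J : ℝ → H → H}
    (hJ : ∀ lam > (0 : ℝ), ∀ x, IsResolventPt f lam x (J lam x)) :
    IsEVIResolvent {y | f y ≠ ⊤} (fun x => (f x).toReal) J where
  mem lam hlam x := hdom.elim fun _ hz => (hJ lam hlam x).ne_top hz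
  evi lam hlam x _ hz := (hJ lam hlam x).evi hH hbot hconv hlam hz

namespace IsEVIResolvent

section PseudoMetric

variable {H : Type*} [PseudoMetricSpace H] {D : Set H} {g : H → ℝ} {J : ℝ → H → H} {lam mu : ℝ}

theorem weighted_sq_dist_resolvent_resolvent_le (h : IsEVIResolvent D g J) (hlam : 0 < lam)
    (hmu : 0 < mu) (u v : H) :
    (lam + mu) * dist (J lam u) (J mu v) ^ 2 + mu * dist u (J lam u) ^ 2
        + lam * dist v (J mu v) ^ 2 ≤
      mu * dist u (J mu v) ^ 2 + lam * dist (J lam u) v ^ 2 := by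
  -- The EVI of each step is tested at the endpoint of the other; with weights `mu` and `lam` the
  -- values of `g` cancel.
  have hu := mul_le_mul_of_nonneg_left (h.evi lam hlam u _ (h.mem mu hmu v)) hmu.le
  have hv := mul_le_mul_of_nonneg_left (h.evi mu hmu v _ (h.mem lam hlam u)) hlam.le
  rw [dist_comm (J mu v) (J lam u), dist_comm v (J lam u)] at hv
  linarith

theorem lipschitzWith_one (h : IsEVIResolvent D g J) (hH : QuadrilateralInequality H)
    (hlam : 0 < lam) : LipschitzWith 1 (J lam) := by
  refine LipschitzWith.mk_one fun x y => le_of_sq_le_sq ?_ dist_nonneg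
  have hstep := h.weighted_sq_dist_resolvent_resolvent_le hlam hlam x y
  have hquad := hH x y (J lam x) (J lam y)
  rw [dist_comm y (J lam x)] at hquad
  refine le_of_mul_le_mul_left ?_ hlam
  linarith [mul_le_mul_of_nonneg_left hquad hlam.le]

theorem dist_resolvent_apply_resolvent_le (h : IsEVIResolvent D g J) (hlam : 0 < lam) (hmu : 0 < mu)
    (x : H) : dist (J lam x) (J mu (J lam x)) ≤ mu * (dist x (J lam x) / lam) := by
  have hstep := h.weighted_sq_dist_resolvent_resolvent_le hlam hmu x (J lam x)
  have htri := mul_le_mul_of_nonneg_left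
    (pow_le_pow_left₀ dist_nonneg (dist_triangle x (J lam x) (J mu (J lam x))) 2) hmu.le
  rw [dist_self] at hstep
  rw [← mul_div_assoc, le_div_iff₀ hlam]
  rcases (dist_nonneg (x := J lam x) (y := J mu (J lam x))).eq_or_lt with hzero | hpos
  · rw [← hzero, zero_mul]
    positivity
  · refine le_of_mul_le_mul_right ?_ hpos
    linarith

theorem sq_dist_resolvent_resolvent_le_sub (h : IsEVIResolvent D g J) (hmu : 0 < mu)
    (hle : mu ≤ lam) (x : H) :
    dist (J lam x) (J mu x) ^ 2 ≤ dist x (J lam x) ^ 2 - dist x (J mu x) ^ 2 := by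
  rcases hle.eq_or_lt with rfl | hlt
  · simp
  have hstep := h.weighted_sq_dist_resolvent_resolvent_le (hmu.trans hlt) hmu x x
  rw [dist_comm (J lam x) x] at hstep
  have hdrop : 0 ≤ mu * dist (J lam x) (J mu x) ^ 2 := by positivity
  refine le_of_mul_le_mul_left ?_ (sub_pos.2 hlt)
  linarith

theorem monotoneOn_sq_dist_resolvent (h : IsEVIResolvent D g J) (x : H) :
    MonotoneOn (fun lam => dist x (J lam x) ^ 2) (Set.Ioi 0) := fun _ hmu _ _ hle =>
  sub_nonneg.1 ((sq_nonneg _).trans (h.sq_dist_resolvent_resolvent_le_sub hmu hle x))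

theorem antitoneOn_apply_resolvent (h : IsEVIResolvent D g J) (x : H) :
    AntitoneOn (fun lam => g (J lam x)) (Set.Ioi 0) := by
  intro mu hmu lam hlam hle
  have hevi := h.evi lam hlam x _ (h.mem mu hmu x)
  have hmono : dist x (J mu x) ^ 2 ≤ dist x (J lam x) ^ 2 :=
    h.monotoneOn_sq_dist_resolvent x hmu hlam hle
  refine sub_nonpos.1 (nonpos_of_mul_nonpos_right (a := 2 * lam) ?_ (mul_pos two_pos hlam))
  linarith [sq_nonneg (dist (J lam x) (J mu x))]

theorem tendsto_resolvent_of_mem_closure (h : IsEVIResolvent D g J) {x : H}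
    (hx : x ∈ closure D) : Tendsto (fun lam => J lam x) (𝓝[>] 0) (𝓝 x) := by
  refine Metric.tendsto_nhds.2 fun ε hε => ?_
  obtain ⟨z, hz, hxz⟩ := Metric.mem_closure_iff.1 hx ε hε
  have hlim : Tendsto (fun lam : ℝ => dist x z ^ 2 + 2 * lam * (g z - g (J 1 x))) (𝓝[>] 0)
      (𝓝 (dist x z ^ 2 + 2 * 0 * (g z - g (J 1 x)))) :=
    (Continuous.tendsto (by fun_prop) 0).mono_left nhdsWithin_le_nhds
  have hlt : dist x z ^ 2 + 2 * 0 * (g z - g (J 1 x)) < ε ^ 2 := by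
    rw [mul_zero, zero_mul, add_zero]
    exact pow_lt_pow_left₀ hxz dist_nonneg two_ne_zero
  filter_upwards [hlim.eventually_lt_const hlt, Ioc_mem_nhdsGT zero_lt_one] with lam hlt hlam
  have hevi := h.evi lam hlam.1 x z hz
  have hg : g (J 1 x) ≤ g (J lam x) :=
    h.antitoneOn_apply_resolvent x hlam.1 (Set.mem_Ioi.2 one_pos) hlam.2
  rw [dist_comm]
  refine lt_of_pow_lt_pow_left₀ 2 hε.le (lt_of_le_of_lt ?_ hlt)
  linarith [mul_le_mul_of_nonneg_left hg hlam.1.le, sq_nonneg (dist (J lam x) z)]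

theorem exists_tendsto_resolvent [CompleteSpace H] (h : IsEVIResolvent D g J) (x : H) :
    ∃ p ∈ closure D, Tendsto (fun lam => J lam x) (𝓝[>] 0) (𝓝 p) := by
  have hpos : ∀ᶠ lam : ℝ in 𝓝[>] 0, 0 < lam := eventually_mem_nhdsWithin
  have hbdd : BddBelow ((fun lam => dist x (J lam x) ^ 2) '' Set.Ioi 0) :=
    ⟨0, by rintro _ ⟨lam, -, rfl⟩; positivity⟩
  have hdist := (h.monotoneOn_sq_dist_resolvent x).tendsto_nhdsGT hbdd
  have hcauchy : Cauchy (map (fun lam => J lam x) (𝓝[>] 0)) := by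
    refine Metric.cauchy_iff.2 ⟨inferInstance, fun ε hε => ?_⟩
    have hnear := Metric.tendsto_nhds.1 hdist (ε ^ 2 / 2) (by positivity)
    refine ⟨_, image_mem_map (hpos.and hnear), ?_⟩
    rintro _ ⟨lam, ⟨hlam, hlam_near⟩, rfl⟩ _ ⟨mu, ⟨hmu, hmu_near⟩, rfl⟩
    wlog hle : mu ≤ lam generalizing lam mu
    · rw [dist_comm]
      exact this mu hmu hmu_near lam hlam hlam_near (le_of_not_ge hle)
    refine lt_of_pow_lt_pow_left₀ 2 hε.le
      ((h.sq_dist_resolvent_resolvent_le_sub hmu hle x).trans_lt ?_)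
    rw [Real.dist_eq, abs_lt] at hlam_near hmu_near
    linarith [hlam_near.2, hmu_near.1]
  obtain ⟨p, hp⟩ := cauchy_map_iff_exists_tendsto.1 hcauchy
  exact ⟨p, mem_closure_of_tendsto hp (hpos.mono fun lam hlam => h.mem lam hlam x), hp⟩

theorem sq_dist_self_iterate_le (h : IsEVIResolvent D g J) (hH : QuadrilateralInequality H) {L : ℝ}
    (hlam : 0 < lam) {y : H} (hL : dist y (J lam y) ≤ lam * L) (m : ℕ) :
    dist y ((J lam)^[m] y) ^ 2 ≤ L ^ 2 * (m * lam) ^ 2 := by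
  rw [← mul_pow]
  refine pow_le_pow_left₀ dist_nonneg ?_ 2
  calc dist y ((J lam)^[m] y) ≤ m * dist y (J lam y) :=
        dist_self_iterate_le_of_lipschitzWith_one (h.lipschitzWith_one hH hlam) m y
    _ ≤ m * (lam * L) := by gcongr
    _ = L * (m * lam) := by ring

theorem sq_dist_iterate_iterate_le (h : IsEVIResolvent D g J) (hH : QuadrilateralInequality H)
    {L : ℝ} (hlam : 0 < lam) (hmu : 0 < mu) {y : H} (hL : ∀ s > (0 : ℝ), dist y (J s y) ≤ s * L)
    (i j : ℕ) :
    dist ((J lam)^[i] y) ((J mu)^[j] y) ^ 2 ≤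
      L ^ 2 * ((i * lam - j * mu) ^ 2 + i * lam ^ 2 + j * mu ^ 2) := by
  -- Crandall–Liggett: the polynomial `E i j` multiplying `L ^ 2` is chosen to satisfy
  -- `(lam + mu) * E (i + 1) (j + 1) = mu * E i (j + 1) + lam * E (i + 1) j`, the equality case of
  -- the recursion coming from `weighted_sq_dist_resolvent_resolvent_le`.
  induction i generalizing j with
  | zero =>
    have hself := h.sq_dist_self_iterate_le hH hmu (hL mu hmu) j
    have hj : 0 ≤ L ^ 2 * (j * mu ^ 2) := by positivity
    simp only [Function.iterate_zero, id, Nat.cast_zero]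
    linarith
  | succ i ihi =>
    induction j with
    | zero =>
      have hself := h.sq_dist_self_iterate_le hH hlam (hL lam hlam) (i + 1)
      have hi : 0 ≤ L ^ 2 * ((i + 1 : ℕ) * lam ^ 2) := by positivity
      rw [dist_comm]
      simp only [Function.iterate_zero, id, Nat.cast_zero]
      linarith
    | succ j ihj =>
      have hbound_i := mul_le_mul_of_nonneg_left (ihi (j + 1)) hmu.le
      have hbound_j := mul_le_mul_of_nonneg_left ihj hlam.le
      have hstep := h.weighted_sq_dist_resolvent_resolvent_le hlam hmu
        ((J lam)^[i] y) ((J mu)^[j] y)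
      simp only [← Function.iterate_succ_apply' (J lam),
        ← Function.iterate_succ_apply' (J mu)] at hstep
      have hdrop_lam : 0 ≤ mu * dist ((J lam)^[i] y) ((J lam)^[i + 1] y) ^ 2 := by positivity
      have hdrop_mu : 0 ≤ lam * dist ((J mu)^[j] y) ((J mu)^[j + 1] y) ^ 2 := by positivity
      refine le_of_mul_le_mul_left ?_ (add_pos hlam hmu)
      push_cast at hbound_i hbound_j ⊢
      linarith

theorem dist_iterate_iterate_le_three_mul (h : IsEVIResolvent D g J)
    (hH : QuadrilateralInequality H) (hlam : 0 < lam) (hmu : 0 < mu) {i j : ℕ} {r : ℝ}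
    (hr : 0 < r) (hij : (i * lam - j * mu) ^ 2 + i * lam ^ 2 + j * mu ^ 2 ≤ r ^ 2) (x : H) :
    dist ((J lam)^[i] x) ((J mu)^[j] x) ≤ 3 * dist x (J r x) := by
  -- Both discrete flows are moved to the starting point `J r x`, whose slope is at most
  -- `dist x (J r x) / r`; each of the three resulting distances is at most `dist x (J r x)`.
  have hlam_move := dist_iterate_le_of_lipschitzWith_one (h.lipschitzWith_one hH hlam) i x (J r x)
  have hmu_move := dist_iterate_le_of_lipschitzWith_one (h.lipschitzWith_one hH hmu) j (J r x) x
  rw [dist_comm (J r x) x] at hmu_move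
  have hmid : dist ((J lam)^[i] (J r x)) ((J mu)^[j] (J r x)) ≤ dist x (J r x) := by
    refine le_of_sq_le_sq ?_ dist_nonneg
    calc dist ((J lam)^[i] (J r x)) ((J mu)^[j] (J r x)) ^ 2
        ≤ (dist x (J r x) / r) ^ 2 * ((i * lam - j * mu) ^ 2 + i * lam ^ 2 + j * mu ^ 2) :=
          h.sq_dist_iterate_iterate_le hH hlam hmu
            (fun s hs => h.dist_resolvent_apply_resolvent_le hr hs x) i j
      _ ≤ (dist x (J r x) / r) ^ 2 * r ^ 2 := by gcongr
      _ = dist x (J r x) ^ 2 := by field_simp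
  linarith [dist_triangle4 ((J lam)^[i] x) ((J lam)^[i] (J r x)) ((J mu)^[j] (J r x))
    ((J mu)^[j] x)]

theorem dist_iterate_div_le (h : IsEVIResolvent D g J) (hH : QuadrilateralInequality H) {t : ℝ}
    (ht : 0 < t) {m k : ℕ} (hm : 0 < m) (hmk : m ≤ k) (x : H) :
    dist ((J (t / m))^[m] x) ((J (t / k))^[k] x) ≤ 3 * dist x (J (t * √(2 / m)) x) := by
  have hk := hm.trans_le hmk
  refine h.dist_iterate_iterate_le_three_mul hH (by positivity) (by positivity) (by positivity) ?_ x
  have hkm : t ^ 2 / k ≤ t ^ 2 / m := by gcongr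
  calc (m * (t / m) - k * (t / k)) ^ 2 + m * (t / m) ^ 2 + k * (t / k) ^ 2
      = t ^ 2 / m + t ^ 2 / k := by field_simp; ring
    _ ≤ t ^ 2 / m + t ^ 2 / m := by gcongr
    _ = (t * √(2 / m)) ^ 2 := by rw [mul_pow, Real.sq_sqrt (by positivity)]; ring

end PseudoMetric

section GradientFlow

variable {H : Type*} [MetricSpace H] {D : Set H} {g : H → ℝ} {J : ℝ → H → H} {t : ℝ} {x : H}

theorem dist_gradientFlowPt_le (h : IsEVIResolvent D g J) (hH : QuadrilateralInequality H)
    (ht : 0 < t) {s : H} (hs : IsGradientFlowPt J t x s) {m : ℕ} (hm : 0 < m) :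
    dist ((J (t / m))^[m] x) s ≤ 3 * dist x (J (t * √(2 / m)) x) := by
  refine le_of_tendsto (tendsto_const_nhds.dist hs) ?_
  filter_upwards [eventually_ge_atTop m] with k hmk using h.dist_iterate_div_le hH ht hm hmk x

theorem tendsto_dist_resolvent_sqrt (h : IsEVIResolvent D g J) (ht : 0 < t)
    (hx : x ∈ closure D) :
    Tendsto (fun m : ℕ => dist x (J (t * √(2 / m)) x)) atTop (𝓝 0) := by
  have hstep : Tendsto (fun m : ℕ => t * √(2 / m)) atTop (𝓝[>] 0) := by
    refine tendsto_nhdsWithin_iff.2 ⟨?_, ?_⟩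
    · simpa using (tendsto_const_div_atTop_nhds_zero_nat 2).sqrt.const_mul t
    · filter_upwards [eventually_gt_atTop 0] with m hm
      exact Set.mem_Ioi.2 (by positivity)
  simpa only [dist_self, Function.comp_def] using
    (tendsto_const_nhds (x := x)).dist ((h.tendsto_resolvent_of_mem_closure hx).comp hstep)

variable [CompleteSpace H]

theorem exists_isGradientFlowPt_of_mem_closure (h : IsEVIResolvent D g J)
    (hH : QuadrilateralInequality H) (ht : 0 < t) (hx : x ∈ closure D) :
    ∃ s, IsGradientFlowPt J t x s := by
  have hrate : Tendsto (fun m : ℕ => 3 * dist x (J (t * √(2 / (m + 1 : ℕ))) x)) atTop (𝓝 0) := by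
    simpa only [mul_zero, Function.comp_def] using
      ((h.tendsto_dist_resolvent_sqrt ht hx).comp (tendsto_add_atTop_nat 1)).const_mul 3
  have hcauchy : CauchySeq fun m : ℕ => (J (t / (m + 1 : ℕ)))^[m + 1] x :=
    cauchySeq_of_le_tendsto_0' _
      (fun m k hmk => h.dist_iterate_div_le hH ht m.succ_pos (Nat.succ_le_succ hmk) x) hrate
  obtain ⟨s, hs⟩ := cauchySeq_tendsto_of_complete hcauchy
  exact ⟨s, (tendsto_add_atTop_iff_nat (f := fun m : ℕ => (J (t / m))^[m] x) 1).1 hs⟩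

theorem exists_isGradientFlowPt (h : IsEVIResolvent D g J) (hH : QuadrilateralInequality H)
    (ht : 0 < t) (x : H) : ∃ s, IsGradientFlowPt J t x s := by
  obtain ⟨p, hpD, hp⟩ := h.exists_tendsto_resolvent x
  obtain ⟨s, hs⟩ := h.exists_isGradientFlowPt_of_mem_closure hH ht hpD
  have hstep : Tendsto (fun m : ℕ => t / (m : ℝ)) atTop (𝓝[>] 0) := by
    refine tendsto_nhdsWithin_iff.2 ⟨tendsto_const_div_atTop_nhds_zero_nat t, ?_⟩
    filter_upwards [eventually_gt_atTop 0] with m hm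
    exact Set.mem_Ioi.2 (by positivity)
  have hfirst : Tendsto (fun m : ℕ => dist (J (t / m) p) (J (t / m) x)) atTop (𝓝 0) := by
    simpa using ((h.tendsto_resolvent_of_mem_closure hpD).comp hstep).dist (hp.comp hstep)
  refine ⟨s, (tendsto_iff_of_dist (squeeze_zero' (.of_forall fun _ => dist_nonneg) ?_ hfirst)).1 hs⟩
  filter_upwards [eventually_gt_atTop 0] with m hm
  obtain ⟨i, rfl⟩ := Nat.exists_eq_add_one_of_ne_zero hm.ne'
  simp only [Function.iterate_succ_apply]
  exact dist_iterate_le_of_lipschitzWith_one (h.lipschitzWith_one hH (by positivity)) i _ _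

theorem isGradientFlowPt_of_forall_eq (h : IsEVIResolvent D g J) (hH : QuadrilateralInequality H)
    (ht : 0 < t) {s : H} (hs : ∀ y, IsGradientFlowPt J t x y → s = y) :
    IsGradientFlowPt J t x s := by
  obtain ⟨y, hy⟩ := h.exists_isGradientFlowPt hH ht x
  exact hs y hy ▸ hy

end GradientFlow

end IsEVIResolvent

theorem resolvent_convergence_implies_semigroup_convergence_general
    {H : Type*} [MetricSpace H] [CompleteSpace H] (hH : QuadrilateralInequality H)
    {ι : Type*} {l : Filter ι} {D : Set H} {Dn : ι → Set H} {g : H → ℝ} {gn : ι → H → ℝ}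
    {J : ℝ → H → H} {Jn : ι → ℝ → H → H}
    (hJ : IsEVIResolvent D g J) (hJn : ∀ n, IsEVIResolvent (Dn n) (gn n) (Jn n))
    {S : ℝ → H → H} {Sn : ι → ℝ → H → H}
    (hS : ∀ t > (0 : ℝ), ∀ x y : H, IsGradientFlowPt J t x y → S t x = y)
    (hSn : ∀ n, ∀ t > (0 : ℝ), ∀ x y : H, IsGradientFlowPt (Jn n) t x y → Sn n t x = y)
    (hres : ∀ x ∈ closure D, ∀ lam > (0 : ℝ),
      Tendsto (fun n => Jn n lam x) l (𝓝 (J lam x))) :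
    ∀ x ∈ closure D, ∀ t > (0 : ℝ), Tendsto (fun n => Sn n t x) l (𝓝 (S t x)) := by
  intro x hx t ht
  have hS_flow := hJ.isGradientFlowPt_of_forall_eq hH ht (hS t ht x)
  have hSn_flow := fun n => (hJn n).isGradientFlowPt_of_forall_eq hH ht (hSn n t ht x)
  refine Metric.tendsto_nhds.2 fun ε hε => ?_
  obtain ⟨m, hm_small, hm⟩ := (((hJ.tendsto_dist_resolvent_sqrt ht hx).eventually_lt_const
    (show 0 < ε / 6 by positivity)).and (eventually_gt_atTop 0)).exists
  set r := t * √(2 / (m : ℝ))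
  have hiterate : Tendsto (fun n => (Jn n (t / m))^[m] x) l (𝓝 ((J (t / m))^[m] x)) :=
    tendsto_iterate_of_lipschitzWith_one (fun n => (hJn n).lipschitzWith_one hH (by positivity))
      (fun y _ => subset_closure (hJ.mem (t / m) (by positivity) y))
      (fun y hy => hres y hy _ (by positivity)) hx m
  have hbound : Tendsto (fun n => 3 * dist x (Jn n r x)
      + dist ((Jn n (t / m))^[m] x) ((J (t / m))^[m] x) + 3 * dist x (J r x)) l
      (𝓝 (3 * dist x (J r x) + 0 + 3 * dist x (J r x))) :=
    (((tendsto_const_nhds.dist (hres x hx r (by positivity))).const_mul 3).add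
      (tendsto_iff_dist_tendsto_zero.1 hiterate)).add_const _
  filter_upwards [hbound.eventually_lt_const (show _ < ε by linarith)] with n hn
  have hS_le := hJ.dist_gradientFlowPt_le hH ht hS_flow hm
  have hSn_le := (hJn n).dist_gradientFlowPt_le hH ht (hSn_flow n) hm
  rw [dist_comm] at hSn_le
  linarith [dist_triangle4 (Sn n t x) ((Jn n (t / m))^[m] x) ((J (t / m))^[m] x) (S t x)]

/-- If the resolvents of `fn` converge to those of `f` at every point of the
closure of the domain of `f`, then the gradient flow semigroups converge as well. -/
theorem resolvent_convergence_implies_semigroup_convergence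
    {H : Type*} [MetricSpace H] [CompleteSpace H] (hH : HadamardSpace H)
    (f : H → EReal) (fn : ℕ → H → EReal)
    (hf : ProperConvexLsc f) (hfn : ∀ n, ProperConvexLsc (fn n))
    (J : ℝ → H → H) (Jn : ℕ → ℝ → H → H)
    (hJ : ∀ lam > (0:ℝ), ∀ x : H, IsResolventPt f lam x (J lam x))
    (hJn : ∀ n, ∀ lam > (0:ℝ), ∀ x : H, IsResolventPt (fn n) lam x (Jn n lam x))
    (S : ℝ → H → H) (Sn : ℕ → ℝ → H → H)
    (hS : ∀ t > (0:ℝ), ∀ x y : H, IsGradientFlowPt J t x y → S t x = y)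
    (hSn : ∀ n, ∀ t > (0:ℝ), ∀ x y : H, IsGradientFlowPt (Jn n) t x y → Sn n t x = y)
    (hres : ∀ x ∈ closure {y : H | f y ≠ ⊤}, ∀ lam > (0:ℝ),
        Tendsto (fun n => Jn n lam x) atTop (𝓝 (J lam x))) :
    ∀ x ∈ closure {y : H | f y ≠ ⊤}, ∀ t > (0:ℝ),
        Tendsto (fun n => Sn n t x) atTop (𝓝 (S t x)) := by
  exact resolvent_convergence_implies_semigroup_convergence_general hH.quadrilateralInequality
    (hf.2.2.1.isEVIResolvent hH hf.1 hf.2.1 hJ)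
    (fun n => (hfn n).2.2.1.isEVIResolvent hH (hfn n).1 (hfn n).2.1 (hJn n)) hS hSn hres
end

section
/- Let (H,d) be a Hadamard space and let C ⊂ H and C_n ⊂ H (n ∈ ℕ) be nonempty closed convex sets. If the sequence (C_n) Mosco-converges to C (i.e., the indicator functions ι_{C_n} converge to ι_C in the sense of Mosco), then for every x ∈ H: (1) d(x,C_n) → d(x,C), and (2) P_{C_n}(x) → P_C(x) in H. -/
open Filter Topology
open scoped Classical

/-!
Let `p` and `pₙ` be the projections of `x` to `C` and `Cₙ`. A strong approximation of `p` by points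
`vₙ ∈ Cₙ` gives `limsup d(x, pₙ) ≤ d(x, p)`. If `d(x, pₙ) ≤ a < d(x, p)` for infinitely many `n`,
then weak sequential compactness of bounded sets and the first Mosco condition produce a point of
`C` at distance at most `a` from `x`, which is absurd. So `d(x, pₙ) → d(x, p)`, and the CAT(0)
inequality bounds `d(vₙ, pₙ)²` by a multiple of `d(x, vₙ)² - d(x, pₙ)²`, which tends to `0`.

Weak compactness is proved by minimizing the asymptotic radius over the countably generated filters
below a given one: where it can no longer be decreased, the asymptotic center is a weak limit.
-/

theorem exists_subset_infinite_cofinite_inf_principal_le {α : Type*} {F : Filter α}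
    [F.IsCountablyGenerated] (hF : F ≤ cofinite) {T : Set α} (hT : ∃ᶠ n in F, n ∈ T) :
    ∃ S ⊆ T, S.Infinite ∧ cofinite ⊓ 𝓟 S ≤ F := by
  obtain ⟨φ, hφ, hφT⟩ := exists_seq_forall_of_frequently hT
  refine ⟨Set.range φ, Set.range_subset_iff.2 hφT, fun hfin => ?_, fun A hA => ?_⟩
  · obtain ⟨k, hk⟩ := ((hφ.mono_right hF).eventually hfin.compl_mem_cofinite).exists
    exact hk (Set.mem_range_self k)
  · obtain ⟨N, hN⟩ := eventually_atTop.1 (hφ hA)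
    rw [mem_inf_principal]
    filter_upwards [((Set.finite_Iio N).image φ).compl_mem_cofinite] with n hn
    rintro ⟨k, rfl⟩
    exact hN k (not_lt.1 fun hk => hn ⟨k, hk, rfl⟩)

/-- The Brezis–Browder ordering principle. -/
theorem exists_le_forall_le_apply_le {α : Type*} [Preorder α] {f : α → ℝ} (hf : Monotone f)
    (hf_bdd : BddBelow (Set.range f))
    (hα : ∀ s : ℕ → α, Antitone s → BddBelow (Set.range s)) (x₀ : α) :
    ∃ x ≤ x₀, ∀ y ≤ x, f x ≤ f y := by
  have exists_almost_min : ∀ (k : ℕ) (x : α),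
      ∃ x' ≤ x, ∀ y ≤ x, f x' ≤ f y + 1 / ((k : ℝ) + 1) := by
    intro k x
    obtain ⟨_, ⟨x', hx', rfl⟩, hlt⟩ := exists_lt_of_csInf_lt
      (Set.nonempty_Iic.image f : (f '' Set.Iic x).Nonempty)
      (lt_add_of_pos_right _ (Nat.one_div_pos_of_nat (α := ℝ) (n := k)))
    refine ⟨x', hx', fun y hy => hlt.le.trans ?_⟩
    gcongr
    exact csInf_le (hf_bdd.mono (Set.image_subset_range f _)) (Set.mem_image_of_mem f hy)
  choose next next_le next_min using exists_almost_min
  let s : ℕ → α := fun n => Nat.rec x₀ next n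
  obtain ⟨x, hx⟩ := hα s (antitone_nat_of_succ_le fun n => next_le n (s n))
  have x_le : ∀ n, x ≤ s n := fun n => hx (Set.mem_range_self n)
  refine ⟨x, x_le 0, fun y hy => ?_⟩
  have hlim : Tendsto (fun k : ℕ => f y + 1 / ((k : ℝ) + 1)) atTop (𝓝 (f y)) := by
    simpa using tendsto_one_div_add_atTop_nhds_zero_nat.const_add (f y)
  exact ge_of_tendsto' hlim fun k =>
    (hf (x_le (k + 1))).trans (next_min k (s k) y (hy.trans (x_le k)))

theorem bddBelow_range_of_antitone_of_neBot_of_isCountablyGenerated {α : Type*} {F₀ : Filter α}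
    (s : ℕ → {F : Filter α // F ≤ F₀ ∧ F.NeBot ∧ F.IsCountablyGenerated}) (hs : Antitone s) :
    BddBelow (Set.range s) := by
  have neBot : ∀ n, (s n).1.NeBot := fun n => (s n).2.2.1
  have countablyGenerated : ∀ n, (s n).1.IsCountablyGenerated := fun n => (s n).2.2.2
  have hdir : Directed (· ≥ ·) fun n => (s n).1 := Antitone.directed_ge fun _ _ h => hs h
  refine ⟨⟨⨅ n, (s n).1, (iInf_le _ 0).trans (s 0).2.1, iInf_neBot_of_directed' hdir neBot,
    inferInstance⟩, ?_⟩
  rintro _ ⟨n, rfl⟩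
  exact iInf_le (fun n => (s n).1) n

section AsymptoticSqRadius

variable {α H : Type*} [MetricSpace H] {F G : Filter α} {u : α → H} {o y : H} {a : ℝ}

/-- The square of the asymptotic radius of `u` along `F`, i.e. of the infimum over all centers `y`
of `limsup d(y, u)`. Taking the infimum of the eventual bounds over all `y` at once avoids a
real-valued `limsup` for each `y`; the value is junk if `F = ⊥` or `u` is unbounded along `F`. -/
noncomputable def asymptoticSqRadius (F : Filter α) (u : α → H) : ℝ :=
  sInf {a | ∃ y, ∀ᶠ n in F, dist y (u n) ^ 2 ≤ a}

theorem nonneg_of_eventually_sq_dist_le [F.NeBot] (h : ∀ᶠ n in F, dist y (u n) ^ 2 ≤ a) : 0 ≤ a :=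
  let ⟨_, hn⟩ := h.exists
  (sq_nonneg _).trans hn

theorem asymptoticSqRadius_le [F.NeBot] (h : ∀ᶠ n in F, dist y (u n) ^ 2 ≤ a) :
    asymptoticSqRadius F u ≤ a :=
  csInf_le ⟨0, fun _ ⟨_, hb⟩ => nonneg_of_eventually_sq_dist_le hb⟩ ⟨y, h⟩

theorem nonempty_asymptoticSqRadius_bounds
    (hu : F.IsBoundedUnder (· ≤ ·) fun n => dist o (u n)) :
    {a | ∃ y, ∀ᶠ n in F, dist y (u n) ^ 2 ≤ a}.Nonempty := by
  obtain ⟨b, hb⟩ := hu.eventually_le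
  exact ⟨b ^ 2, o, hb.mono fun _ hn => pow_le_pow_left₀ dist_nonneg hn 2⟩

theorem asymptoticSqRadius_nonneg [F.NeBot]
    (hu : F.IsBoundedUnder (· ≤ ·) fun n => dist o (u n)) : 0 ≤ asymptoticSqRadius F u :=
  le_csInf (nonempty_asymptoticSqRadius_bounds hu) fun _ ⟨_, hb⟩ =>
    nonneg_of_eventually_sq_dist_le hb

theorem asymptoticSqRadius_mono [F.NeBot] (hFG : F ≤ G)
    (hu : G.IsBoundedUnder (· ≤ ·) fun n => dist o (u n)) :
    asymptoticSqRadius F u ≤ asymptoticSqRadius G u :=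
  le_csInf (nonempty_asymptoticSqRadius_bounds hu) fun _ ⟨_, hb⟩ =>
    asymptoticSqRadius_le (hb.filter_mono hFG)

theorem exists_eventually_sq_dist_le_of_asymptoticSqRadius_lt
    (hu : F.IsBoundedUnder (· ≤ ·) fun n => dist o (u n)) (ha : asymptoticSqRadius F u < a) :
    ∃ y, ∀ᶠ n in F, dist y (u n) ^ 2 ≤ a :=
  let ⟨_, ⟨y, hy⟩, hlt⟩ := exists_lt_of_csInf_lt (nonempty_asymptoticSqRadius_bounds hu) ha
  ⟨y, hy.mono fun _ hn => hn.trans hlt.le⟩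

end AsymptoticSqRadius

/-- Weak convergence of `u` to `c` along `F`. For bounded `u` the condition says that `c` is an
asymptotic center of `u` along every proper filter `G ≤ F`; in this form it needs no `limsup` and
can be checked separately on the pieces of a partition of the index type. -/
def WeakConvAlong {α H : Type*} [MetricSpace H] (F : Filter α) (u : α → H) (c : H) : Prop :=
  ∀ y : H, ∀ ε > 0, ∀ᶠ n in F, dist c (u n) ^ 2 ≤ dist y (u n) ^ 2 + ε

theorem WeakConvAlong.mono {α H : Type*} [MetricSpace H] {F G : Filter α} {u : α → H} {c : H}
    (h : WeakConvAlong G u c) (hFG : F ≤ G) : WeakConvAlong F u c :=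
  fun y ε hε => (h y ε hε).filter_mono hFG

theorem WeakConvAlong.piecewise_const {α H : Type*} [MetricSpace H] {F : Filter α} {u : α → H}
    {c : H} {S : Set α} (h : WeakConvAlong (F ⊓ 𝓟 S) u c) :
    WeakConvAlong F (S.piecewise u fun _ => c) c := by
  intro y ε hε
  filter_upwards [eventually_inf_principal.1 (h y ε hε)] with n hn
  by_cases hnS : n ∈ S
  · simpa only [Set.piecewise_eq_of_mem _ _ _ hnS] using hn hnS
  · rw [Set.piecewise_eq_of_notMem _ _ _ hnS, dist_self, zero_pow two_ne_zero]
    positivity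

theorem WeakConvAlong.weakConvSeq {H : Type*} [MetricSpace H] {w : ℕ → H} {c : H}
    (h : WeakConvAlong atTop w c) (hw : Bornology.IsBounded (Set.range w)) : WeakConvSeq w c := by
  intro φ hφ y
  obtain ⟨R, hR⟩ := hw.subset_closedBall y
  have hy : ∀ n, dist y (w n) ≤ R := fun n => Metric.mem_closedBall'.1 (hR (Set.mem_range_self n))
  have bounded_above : atTop.IsBoundedUnder (· ≤ ·) fun n => dist y (w (φ n)) ^ 2 :=
    isBoundedUnder_of ⟨R ^ 2, fun n => pow_le_pow_left₀ dist_nonneg (hy (φ n)) 2⟩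
  have bounded_below : atTop.IsBoundedUnder (· ≥ ·) fun n => dist c (w (φ n)) ^ 2 :=
    isBoundedUnder_of ⟨0, fun _ => sq_nonneg _⟩
  refine le_of_forall_gt_imp_ge_of_dense fun a ha => ?_
  obtain ⟨b, hb, hba⟩ := exists_between ha
  refine limsup_le_of_le bounded_below.isCoboundedUnder_le ?_
  filter_upwards [eventually_lt_of_limsup_lt hb bounded_above,
    hφ.tendsto_atTop.eventually (h y (a - b) (sub_pos.2 hba))] with n hyn hcn
  simp only [Function.comp_apply] at hyn ⊢
  linarith

theorem weakConvAlong_of_forall_asymptoticSqRadius_le {α H : Type*} [MetricSpace H] {F : Filter α}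
    {u : α → H} {c : H} (hc : ∀ a > asymptoticSqRadius F u, ∀ᶠ n in F, dist c (u n) ^ 2 ≤ a)
    (hF : ∀ S : Set α, (F ⊓ 𝓟 S).NeBot →
      asymptoticSqRadius F u ≤ asymptoticSqRadius (F ⊓ 𝓟 S) u) :
    WeakConvAlong F u c := by
  intro y ε hε
  by_contra hnot
  let S : Set α := {n | ¬ dist c (u n) ^ 2 ≤ dist y (u n) ^ 2 + ε}
  have hS : (F ⊓ 𝓟 S).NeBot := frequently_mem_iff_neBot.1 (not_eventually.1 hnot)
  have hy : ∀ᶠ n in F ⊓ 𝓟 S, dist y (u n) ^ 2 ≤ asymptoticSqRadius F u - ε / 2 := by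
    rw [eventually_inf_principal]
    filter_upwards [hc _ (lt_add_of_pos_right _ (half_pos hε))] with n hcn hnS
    linarith [not_le.1 hnS]
  linarith [hF S hS, asymptoticSqRadius_le hy]

section HadamardSpace

variable {α H : Type*} [MetricSpace H] [CompleteSpace H]

theorem HadamardSpace.sq_dist_midpoint_le (hH : HadamardSpace H) {γ : ℝ → H} (hγ : IsGeodesic γ)
    (z : H) :
    dist (γ (1 / 2)) z ^ 2 ≤
      (dist (γ 0) z ^ 2 + dist (γ 1) z ^ 2) / 2 - dist (γ 0) (γ 1) ^ 2 / 4 := by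
  have h := hH.cat0 z γ hγ (1 / 2) (by norm_num)
  simp only [dist_comm z] at h
  linarith

/-- First variation: dividing the CAT(0) inequality by `t` turns almost-minimality of `γ 0` among
the points of the segment into a Pythagorean inequality. -/
theorem HadamardSpace.mul_sq_dist_add_sq_dist_le (hH : HadamardSpace H) {γ : ℝ → H}
    (hγ : IsGeodesic γ) {t ε : ℝ} (ht : t ∈ Set.Ioc (0 : ℝ) 1) {z : H}
    (h : dist z (γ 0) ^ 2 ≤ dist z (γ t) ^ 2 + t * ε) :
    (1 - t) * dist (γ 0) (γ 1) ^ 2 + dist z (γ 0) ^ 2 ≤ dist z (γ 1) ^ 2 + ε := by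
  have hcat := hH.cat0 z γ hγ t ⟨ht.1.le, ht.2⟩
  refine le_of_mul_le_mul_left ?_ ht.1
  linarith

theorem HadamardSpace.sq_dist_le_of_eventually_sq_dist_le (hH : HadamardSpace H) {F : Filter α}
    [F.NeBot] {u : α → H} {v w : H} {a : ℝ} (hv : ∀ᶠ n in F, dist v (u n) ^ 2 ≤ a)
    (hw : ∀ᶠ n in F, dist w (u n) ^ 2 ≤ a) :
    dist v w ^ 2 ≤ 4 * (a - asymptoticSqRadius F u) := by
  obtain ⟨γ, hγ, rfl, rfl⟩ := hH.geodesic v w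
  have hmid : ∀ᶠ n in F, dist (γ (1 / 2)) (u n) ^ 2 ≤ a - dist (γ 0) (γ 1) ^ 2 / 4 := by
    filter_upwards [hv, hw] with n hvn hwn
    linarith [hH.sq_dist_midpoint_le hγ (u n)]
  linarith [asymptoticSqRadius_le hmid]

theorem HadamardSpace.exists_forall_asymptoticSqRadius_lt_eventually_sq_dist_le
    (hH : HadamardSpace H) {F : Filter α} [F.NeBot]
    {u : α → H} {o : H} (hu : F.IsBoundedUnder (· ≤ ·) fun n => dist o (u n)) :
    ∃ c, ∀ a > asymptoticSqRadius F u, ∀ᶠ n in F, dist c (u n) ^ 2 ≤ a := by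
  set r := asymptoticSqRadius F u
  have hr : 0 ≤ r := asymptoticSqRadius_nonneg hu
  choose v hv using fun k : ℕ => exists_eventually_sq_dist_le_of_asymptoticSqRadius_lt hu
    (lt_add_of_pos_right r (Nat.one_div_pos_of_nat (α := ℝ) (n := k)))
  have v_mono : ∀ {k N : ℕ}, N ≤ k → ∀ᶠ n in F, dist (v k) (u n) ^ 2 ≤ r + 1 / ((N : ℝ) + 1) :=
    fun hNk => (hv _).mono fun _ hn =>
      hn.trans (add_le_add_right (Nat.one_div_le_one_div hNk) r)
  have v_cauchy : CauchySeq v := by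
    refine cauchySeq_of_le_tendsto_0 (fun N : ℕ => √(4 * (1 / ((N : ℝ) + 1)))) ?_ ?_
    · intro j k N hj hk
      refine Real.le_sqrt_of_sq_le ?_
      have h := hH.sq_dist_le_of_eventually_sq_dist_le (v_mono hj) (v_mono hk)
      rwa [add_sub_cancel_left] at h
    · simpa using ((tendsto_one_div_add_atTop_nhds_zero_nat (𝕜 := ℝ)).const_mul 4).sqrt
  obtain ⟨c, hc⟩ := cauchySeq_tendsto_of_complete v_cauchy
  have hlim : Tendsto (fun k : ℕ => (dist c (v k) + √(r + 1 / ((k : ℝ) + 1))) ^ 2) atTop (𝓝 r) := by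
    simpa [Real.sq_sqrt hr] using ((tendsto_const_nhds (x := c).dist hc).add
      (tendsto_one_div_add_atTop_nhds_zero_nat.const_add r).sqrt).pow 2
  refine ⟨c, fun a ha => ?_⟩
  obtain ⟨k, hk⟩ := (hlim.eventually_lt_const ha).exists
  filter_upwards [hv k] with n hn
  refine le_trans (pow_le_pow_left₀ dist_nonneg ?_ 2) hk.le
  exact (dist_triangle c (v k) (u n)).trans (add_le_add_right (Real.le_sqrt_of_sq_le hn) _)

theorem HadamardSpace.exists_le_weakConvAlong (hH : HadamardSpace H) {F₀ : Filter α} [F₀.NeBot]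
    [F₀.IsCountablyGenerated] {u : α → H} {o : H}
    (hu : F₀.IsBoundedUnder (· ≤ ·) fun n => dist o (u n)) :
    ∃ F ≤ F₀, F.NeBot ∧ F.IsCountablyGenerated ∧ ∃ c, WeakConvAlong F u c := by
  obtain ⟨⟨F, hF, hF_ne, hF_cg⟩, -, hmin⟩ := exists_le_forall_le_apply_le
    (f := fun F : {F : Filter α // F ≤ F₀ ∧ F.NeBot ∧ F.IsCountablyGenerated} =>
      asymptoticSqRadius F.1 u)
    (fun F G hFG => have := F.2.2.1; asymptoticSqRadius_mono hFG (hu.mono G.2.1))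
    ⟨0, by rintro _ ⟨F, rfl⟩; have := F.2.2.1; exact asymptoticSqRadius_nonneg (hu.mono F.2.1)⟩
    bddBelow_range_of_antitone_of_neBot_of_isCountablyGenerated ⟨F₀, le_rfl, ‹_›, ‹_›⟩
  obtain ⟨c, hc⟩ :=
    hH.exists_forall_asymptoticSqRadius_lt_eventually_sq_dist_le (hu.mono hF)
  refine ⟨F, hF, hF_ne, hF_cg, c, weakConvAlong_of_forall_asymptoticSqRadius_le hc ?_⟩
  intro S hS
  exact hmin ⟨F ⊓ 𝓟 S, inf_le_left.trans hF, hS, inferInstance⟩ (inf_le_left : F ⊓ 𝓟 S ≤ F)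

theorem WeakConvAlong.dist_le_of_frequently (hH : HadamardSpace H) {F : Filter α} {u : α → H}
    {c x : H} {a : ℝ} (hc : WeakConvAlong F u c) (hx : ∃ᶠ n in F, dist x (u n) ≤ a) :
    dist x c ≤ a := by
  obtain ⟨γ, hγ, rfl, rfl⟩ := hH.geodesic c x
  have ha : 0 ≤ a := let ⟨_, hn⟩ := hx.exists; dist_nonneg.trans hn
  have near : ∀ t ∈ Set.Ioc (0 : ℝ) 1, (1 - t) * dist (γ 0) (γ 1) ^ 2 ≤ a ^ 2 + t := by
    intro t ht
    obtain ⟨n, hxn, hcn⟩ := (hx.and_eventually (hc (γ t) (t * t) (mul_pos ht.1 ht.1))).exists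
    simp only [dist_comm _ (u n)] at hxn hcn
    have hvar := hH.mul_sq_dist_add_sq_dist_le hγ ht hcn
    have hsq := pow_le_pow_left₀ dist_nonneg hxn 2
    linarith [sq_nonneg (dist (u n) (γ 0))]
  have hleft : Tendsto (fun t : ℝ => (1 - t) * dist (γ 0) (γ 1) ^ 2) (𝓝[>] 0)
      (𝓝 (dist (γ 0) (γ 1) ^ 2)) :=
    tendsto_nhdsWithin_of_tendsto_nhds (Continuous.tendsto' (by fun_prop) _ _ (by simp))
  have hright : Tendsto (fun t : ℝ => a ^ 2 + t) (𝓝[>] 0) (𝓝 (a ^ 2)) :=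
    tendsto_nhdsWithin_of_tendsto_nhds (Continuous.tendsto' (by fun_prop) _ _ (by simp))
  rw [dist_comm]
  exact le_of_sq_le_sq (le_of_tendsto_of_tendsto hleft hright
    (mem_of_superset (Ioc_mem_nhdsGT one_pos) near)) ha

theorem HadamardSpace.exists_weakConvSeq_of_frequently_mem_closedBall (hH : HadamardSpace H)
    {q : ℕ → H} {x : H} {a : ℝ} (hq : ∃ᶠ n in atTop, q n ∈ Metric.closedBall x a) :
    ∃ w : ℕ → H, ∃ c ∈ Metric.closedBall x a, Set.range w ⊆ Metric.closedBall x a ∧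
      (∃ᶠ n in atTop, w n = q n) ∧ WeakConvSeq w c := by
  let T : Set ℕ := {n | q n ∈ Metric.closedBall x a}
  have : (atTop ⊓ 𝓟 T).NeBot := frequently_mem_iff_neBot.1 hq
  have hT : ∀ᶠ n in atTop ⊓ 𝓟 T, n ∈ T := mem_inf_of_right (mem_principal_self T)
  obtain ⟨F, hF, _, _, c, hc⟩ := hH.exists_le_weakConvAlong (u := q)
    (isBoundedUnder_of_eventually_le (hT.mono fun _ hn => Metric.mem_closedBall'.1 hn))
  obtain ⟨S, hST, hS, hSF⟩ := exists_subset_infinite_cofinite_inf_principal_le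
    ((hF.trans inf_le_left).trans_eq Nat.cofinite_eq_atTop.symm)
    (hT.filter_mono hF).frequently
  rw [Nat.cofinite_eq_atTop] at hSF
  have hcS : WeakConvAlong (atTop ⊓ 𝓟 S) q c := hc.mono hSF
  have hw : WeakConvAlong atTop (S.piecewise q fun _ => c) c := hcS.piecewise_const
  have hS_freq : ∃ᶠ n in atTop, n ∈ S := Nat.frequently_atTop_iff_infinite.2 hS
  have hc_ball : c ∈ Metric.closedBall x a := Metric.mem_closedBall'.2
    (hc.dist_le_of_frequently hH
      ((hT.filter_mono hF).mono fun _ hn => Metric.mem_closedBall'.1 hn).frequently)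
  have hw_ball : Set.range (S.piecewise q fun _ => c) ⊆ Metric.closedBall x a := by
    rintro _ ⟨n, rfl⟩
    by_cases hn : n ∈ S
    · rw [Set.piecewise_eq_of_mem _ _ _ hn]
      exact hST hn
    · rwa [Set.piecewise_eq_of_notMem _ _ _ hn]
  exact ⟨_, c, hc_ball, hw_ball, hS_freq.mono fun n hn => Set.piecewise_eq_of_mem _ _ _ hn,
    hw.weakConvSeq (Metric.isBounded_closedBall.subset hw_ball)⟩

end HadamardSpace

section Projection

variable {H : Type*} [MetricSpace H] {C : Set H} {x p y : H}

theorem IsProjPt.infDist_eq (hp : IsProjPt C x p) : Metric.infDist x C = dist x p :=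
  le_antisymm (Metric.infDist_le_dist_of_mem hp.1)
    ((Metric.le_infDist ⟨p, hp.1⟩).2 fun {c} hc => hp.2 c hc)

theorem IsProjPt.sq_dist_le [CompleteSpace H] (hH : HadamardSpace H) (hC : GeodesicConvex C)
    (hp : IsProjPt C x p) (hy : y ∈ C) :
    dist p y ^ 2 ≤ 2 * (dist x y ^ 2 - dist x p ^ 2) := by
  obtain ⟨γ, hγ, rfl, rfl⟩ := hH.geodesic p y
  have hmid : γ (1 / 2) ∈ C := hC γ hγ hp.1 hy (1 / 2) (by norm_num)
  have hvar := hH.mul_sq_dist_add_sq_dist_le (t := 1 / 2) (ε := 0) (z := x) hγ (by norm_num)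
    (by simpa using pow_le_pow_left₀ dist_nonneg (hp.2 _ hmid) 2)
  linarith

end Projection

section MoscoConv

variable {H : Type*} [MetricSpace H] {C : Set H} {Cn : ℕ → Set H}

theorem MoscoConv.mem_of_frequently_mem
    (hM : MoscoConv (fun n => indicatorE (Cn n)) (indicatorE C)) {w : ℕ → H} {c : H}
    (hb : Bornology.IsBounded (Set.range w)) (hw : WeakConvSeq w c)
    (hfreq : ∃ᶠ n in atTop, w n ∈ Cn n) : c ∈ C := by
  by_contra hcC
  have htop : (⊤ : EReal) ≤ liminf (fun n => indicatorE (Cn n) (w n)) atTop := by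
    simpa only [indicatorE, if_neg hcC] using hM.1 c w hb hw
  obtain ⟨n, hn, hpos⟩ := (hfreq.and_eventually
    (eventually_lt_of_lt_liminf (EReal.zero_lt_top.trans_le htop))).exists
  simp [indicatorE, hn] at hpos

theorem MoscoConv.exists_tendsto_eventually_mem
    (hM : MoscoConv (fun n => indicatorE (Cn n)) (indicatorE C)) {p : H} (hp : p ∈ C) :
    ∃ v : ℕ → H, Tendsto v atTop (𝓝 p) ∧ ∀ᶠ n in atTop, v n ∈ Cn n := by
  obtain ⟨v, hv, hind⟩ := hM.2 p
  rw [show indicatorE C p = 0 from if_pos hp] at hind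
  refine ⟨v, hv, (hind.eventually_lt_const EReal.zero_lt_top).mono fun n hn => ?_⟩
  by_contra hnot
  simp [indicatorE, hnot] at hn

variable [CompleteSpace H] {x p : H} {q : ℕ → H}

theorem MoscoConv.eventually_lt_dist (hH : HadamardSpace H)
    (hM : MoscoConv (fun n => indicatorE (Cn n)) (indicatorE C)) (hq : ∀ᶠ n in atTop, q n ∈ Cn n)
    {a : ℝ} (ha : ∀ c ∈ C, a < dist x c) : ∀ᶠ n in atTop, a < dist x (q n) := by
  by_contra hnot
  have hball : ∃ᶠ n in atTop, q n ∈ Metric.closedBall x a :=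
    (not_eventually.1 hnot).mono fun _ hn => Metric.mem_closedBall'.2 (not_lt.1 hn)
  obtain ⟨w, c, hc, hw_ball, hwq, hw⟩ := hH.exists_weakConvSeq_of_frequently_mem_closedBall hball
  have hcC : c ∈ C := hM.mem_of_frequently_mem (Metric.isBounded_closedBall.subset hw_ball) hw
    ((hwq.and_eventually hq).mono fun _ hn => hn.1 ▸ hn.2)
  exact (ha c hcC).not_ge (Metric.mem_closedBall'.1 hc)

theorem MoscoConv.tendsto_dist_projPt (hH : HadamardSpace H)
    (hM : MoscoConv (fun n => indicatorE (Cn n)) (indicatorE C)) (hp : IsProjPt C x p)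
    (hq : ∀ n, IsProjPt (Cn n) x (q n)) :
    Tendsto (fun n => dist x (q n)) atTop (𝓝 (dist x p)) := by
  obtain ⟨v, hv, hvmem⟩ := hM.exists_tendsto_eventually_mem hp.1
  refine tendsto_order.2 ⟨fun a ha => ?_, fun a ha => ?_⟩
  · exact hM.eventually_lt_dist hH (.of_forall fun n => (hq n).1)
      fun c hc => ha.trans_le (hp.2 c hc)
  · filter_upwards [hvmem, (tendsto_const_nhds.dist hv).eventually_lt_const ha] with n hn hlt
    exact ((hq n).2 _ hn).trans_lt hlt

theorem MoscoConv.tendsto_projPt (hH : HadamardSpace H) (hCn : ∀ n, GeodesicConvex (Cn n))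
    (hM : MoscoConv (fun n => indicatorE (Cn n)) (indicatorE C)) (hp : IsProjPt C x p)
    (hq : ∀ n, IsProjPt (Cn n) x (q n)) : Tendsto q atTop (𝓝 p) := by
  obtain ⟨v, hv, hvmem⟩ := hM.exists_tendsto_eventually_mem hp.1
  have hxv : Tendsto (fun n => dist x (v n)) atTop (𝓝 (dist x p)) := tendsto_const_nhds.dist hv
  have hbound : Tendsto (fun n => √(2 * (dist x (v n) ^ 2 - dist x (q n) ^ 2))) atTop (𝓝 0) := by
    simpa using
      (((hxv.pow 2).sub ((hM.tendsto_dist_projPt hH hp hq).pow 2)).const_mul 2).sqrt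
  refine hv.congr_dist (squeeze_zero' (.of_forall fun _ => dist_nonneg) ?_ hbound)
  filter_upwards [hvmem] with n hn
  rw [dist_comm]
  exact Real.le_sqrt_of_sq_le ((hq n).sq_dist_le hH (hCn n) hn)

end MoscoConv

/-- Mosco convergence of nonempty closed convex sets in a Hadamard space
implies convergence of distance functions and of metric projections. -/
theorem mosco_sets_implies_dist_and_proj_convergence
    {H : Type*} [MetricSpace H] [CompleteSpace H] (hH : HadamardSpace H)
    (C : Set H) (Cn : ℕ → Set H)
    (hCne : C.Nonempty) (hCcl : IsClosed C) (hCcv : GeodesicConvex C)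
    (hCnne : ∀ n, (Cn n).Nonempty) (hCncl : ∀ n, IsClosed (Cn n))
    (hCncv : ∀ n, GeodesicConvex (Cn n))
    (hM : MoscoConv (fun n => indicatorE (Cn n)) (indicatorE C))
    (P : H → H) (Pn : ℕ → H → H)
    (hP : ∀ x : H, IsProjPt C x (P x)) (hPn : ∀ n, ∀ x : H, IsProjPt (Cn n) x (Pn n x)) :
    ∀ x : H,
      Tendsto (fun n => Metric.infDist x (Cn n)) atTop (𝓝 (Metric.infDist x C)) ∧
      Tendsto (fun n => Pn n x) atTop (𝓝 (P x)) := by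
  intro x
  constructor
  · simpa only [(hP x).infDist_eq, (hPn _ x).infDist_eq] using
      hM.tendsto_dist_projPt hH (hP x) fun n => hPn n x
  · exact hM.tendsto_projPt hH hCncv (hP x) fun n => hPn n x
end

section
/- Let (H,d) be a Hadamard space and (x_n) ⊂ H a bounded sequence. Then the function ω(x) = limsup_{n→∞} d(x,x_n)², x ∈ H, has a unique minimizer (called the asymptotic center of (x_n)). -/
open Filter Topology
open scoped Classical

/-!
Averaging the CAT(0) inequality at the midpoint of a geodesic over the sequence shows that `ω`
inherits strong convexity from the squared distance functions: the midpoint `m` of `a` and `b`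
satisfies `ω m ≤ (ω a + ω b) / 2 - dist a b ^ 2 / 4`. If `I = inf ω`, then `I ≤ ω m` turns this
into `dist a b ^ 2 ≤ 2 * ((ω a - I) + (ω b - I))`. So minimizing sequences, encoded by the single
filter `comap ω (𝓝 I)`, are Cauchy, their limits are minimizers by lower semicontinuity, and two
minimizers are at distance `0`.
-/

/-- Strong midpoint convexity of a real function on a metric space with parameter `β`. The point `m`
plays the role of the midpoint of `a` and `b`, and the constant is that of `StronglyConvexWith β` at
`t = 1 / 2`. -/
def StronglyMidpointConvexWith {X : Type*} [PseudoMetricSpace X] (β : ℝ) (f : X → ℝ) : Prop :=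
  ∀ a b : X, ∃ m : X, f m ≤ (f a + f b) / 2 - β / 4 * dist a b ^ 2

namespace StronglyMidpointConvexWith

section PseudoMetricSpace

variable {X : Type*} [PseudoMetricSpace X] {β I : ℝ} {f : X → ℝ}

theorem mul_dist_sq_le (hf : StronglyMidpointConvexWith β f) (hI : ∀ y, I ≤ f y) (a b : X) :
    β * dist a b ^ 2 ≤ 2 * ((f a - I) + (f b - I)) := by
  obtain ⟨m, hm⟩ := hf a b
  linarith [hI m]

theorem cauchy_comap_nhds_of_isGLB (hf : StronglyMidpointConvexWith β f) (hβ : 0 < β)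
    (hI : IsGLB (Set.range f) I) : Cauchy (comap f (𝓝 I)) := by
  have hle : ∀ y, I ≤ f y := fun y => hI.1 (Set.mem_range_self y)
  have hne : (comap f (𝓝 I)).NeBot :=
    comap_neBot_iff_frequently.2 (hI.frequently_nhds_mem hI.nonempty)
  refine Metric.cauchy_iff.2 ⟨hne, fun ε hε => ?_⟩
  have hlt : I < I + β * ε ^ 2 / 4 := lt_add_of_pos_right I (by positivity)
  refine ⟨{y | f y < I + β * ε ^ 2 / 4}, preimage_mem_comap (Iio_mem_nhds hlt),
    fun a (ha : f a < _) b (hb : f b < _) => ?_⟩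
  have hab : β * dist a b ^ 2 < β * ε ^ 2 := by linarith [hf.mul_dist_sq_le hle a b]
  exact lt_of_pow_lt_pow_left₀ 2 hε.le (lt_of_mul_lt_mul_left hab hβ.le)

theorem exists_forall_le [CompleteSpace X] [Nonempty X] (hf : StronglyMidpointConvexWith β f)
    (hβ : 0 < β) (hlsc : LowerSemicontinuous f) (hbdd : BddBelow (Set.range f)) :
    ∃ c, ∀ y, f c ≤ f y := by
  obtain ⟨I, hI⟩ : ∃ I, IsGLB (Set.range f) I := ⟨_, isGLB_ciInf hbdd⟩
  have hcauchy := hf.cauchy_comap_nhds_of_isGLB hβ hI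
  have := hcauchy.1
  obtain ⟨c, hc⟩ := CompleteSpace.complete hcauchy
  have hcI : f c ≤ I :=
    hlsc.isClosed_epigraph.mem_of_tendsto
      (Tendsto.prodMk_nhds (tendsto_id'.2 hc) tendsto_comap) (.of_forall fun y => le_refl (f y))
  exact ⟨c, fun y => hcI.trans (hI.1 (Set.mem_range_self y))⟩

end PseudoMetricSpace

section MetricSpace

variable {X : Type*} [MetricSpace X] {β : ℝ} {f : X → ℝ}

theorem eq_of_forall_le (hf : StronglyMidpointConvexWith β f) (hβ : 0 < β) {a b : X}
    (ha : ∀ y, f a ≤ f y) (hb : ∀ y, f b ≤ f y) : a = b := by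
  have hab : β * dist a b ^ 2 ≤ 0 := by linarith [hf.mul_dist_sq_le ha a b, hb a]
  have hdist : dist a b ^ 2 ≤ 0 := nonpos_of_mul_nonpos_right hab hβ
  exact dist_eq_zero.1 (pow_eq_zero_iff two_ne_zero |>.1 (hdist.antisymm (sq_nonneg _)))

theorem existsUnique_forall_le [CompleteSpace X] [Nonempty X]
    (hf : StronglyMidpointConvexWith β f) (hβ : 0 < β) (hlsc : LowerSemicontinuous f)
    (hbdd : BddBelow (Set.range f)) : ∃! c, ∀ y, f c ≤ f y :=
  existsUnique_of_exists_of_unique (hf.exists_forall_le hβ hlsc hbdd)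
    fun _ _ => hf.eq_of_forall_le hβ

end MetricSpace

end StronglyMidpointConvexWith

section AsymptoticRadius

variable {X : Type*} [PseudoMetricSpace X]

theorem dist_sq_le_dist_sq_add (a b z : X) :
    dist a z ^ 2 ≤ dist b z ^ 2 + dist a b * (2 * dist a z + dist a b) := by
  have hsub : dist a z - dist b z ≤ dist a b := by linarith [dist_triangle a b z]
  have hadd : dist a z + dist b z ≤ 2 * dist a z + dist a b := by
    linarith [dist_triangle_left b z a]
  have hprod : (dist a z - dist b z) * (dist a z + dist b z) ≤
      dist a b * (2 * dist a z + dist a b) :=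
    mul_le_mul hsub hadd (by positivity) dist_nonneg
  linarith

/-- The squared asymptotic radius `ω(y) = limsup_{z → F} d(y,z)²` of a filter `F` about `y`; for a
sequence `x` take `F = map x atTop`. The `limsup` is real-valued, hence meaningful only where
`d(y,·)` is bounded along `F`, e.g. if `F` is disjoint from `Bornology.cobounded X`. -/
noncomputable def asymptoticRadiusSq (F : Filter X) (y : X) : ℝ :=
  limsup (fun z => dist y z ^ 2) F

variable {F : Filter X}

theorem exists_eventually_dist_le (hF : Disjoint F (Bornology.cobounded X)) (y : X) :
    ∃ B, ∀ᶠ z in F, dist y z ≤ B := by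
  obtain ⟨s, hsF, hs⟩ := hF.exists_isBounded
  obtain ⟨B, hB⟩ := hs.subset_closedBall y
  exact ⟨B, mem_of_superset hsF fun z hz => Metric.mem_closedBall'.1 (hB hz)⟩

theorem eventually_dist_sq_lt_asymptoticRadiusSq_add (hF : Disjoint F (Bornology.cobounded X))
    (y : X) {ε : ℝ} (hε : 0 < ε) : ∀ᶠ z in F, dist y z ^ 2 < asymptoticRadiusSq F y + ε := by
  obtain ⟨B, hB⟩ := exists_eventually_dist_le hF y
  exact eventually_lt_of_limsup_lt (lt_add_of_pos_right _ hε) (isBoundedUnder_of_eventually_le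
    (hB.mono fun z hz => pow_le_pow_left₀ dist_nonneg hz 2))

variable [F.NeBot]

theorem asymptoticRadiusSq_le {y : X} {r : ℝ} (h : ∀ᶠ z in F, dist y z ^ 2 ≤ r) :
    asymptoticRadiusSq F y ≤ r :=
  limsup_le_of_le (isCoboundedUnder_le_of_le F (x := 0) fun _ => sq_nonneg _) h

theorem asymptoticRadiusSq_nonneg (hF : Disjoint F (Bornology.cobounded X)) (y : X) :
    0 ≤ asymptoticRadiusSq F y := by
  refine le_of_forall_pos_le_add fun ε hε => ?_
  obtain ⟨z, hz⟩ := (eventually_dist_sq_lt_asymptoticRadiusSq_add hF y hε).exists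
  exact (sq_nonneg _).trans hz.le

theorem asymptoticRadiusSq_le_add (hF : Disjoint F (Bornology.cobounded X)) {a : X} {B : ℝ}
    (hB : ∀ᶠ z in F, dist a z ≤ B) (b : X) :
    asymptoticRadiusSq F a ≤ asymptoticRadiusSq F b + dist a b * (2 * B + dist a b) := by
  refine le_of_forall_pos_le_add fun ε hε => asymptoticRadiusSq_le ?_
  filter_upwards [hB, eventually_dist_sq_lt_asymptoticRadiusSq_add hF b hε] with z hBz hz
  calc dist a z ^ 2
      ≤ dist b z ^ 2 + dist a b * (2 * dist a z + dist a b) := dist_sq_le_dist_sq_add a b z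
    _ ≤ (asymptoticRadiusSq F b + ε) + dist a b * (2 * B + dist a b) := by gcongr
    _ = asymptoticRadiusSq F b + dist a b * (2 * B + dist a b) + ε := by ring

theorem lowerSemicontinuous_asymptoticRadiusSq (hF : Disjoint F (Bornology.cobounded X)) :
    LowerSemicontinuous (asymptoticRadiusSq F) := by
  intro a r hr
  obtain ⟨B, hB⟩ := exists_eventually_dist_le hF a
  have hcont : Continuous fun b => asymptoticRadiusSq F a - dist a b * (2 * B + dist a b) := by
    fun_prop
  filter_upwards [hcont.continuousAt.eventually_const_lt (by simpa using hr)] with b hb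
  linarith [asymptoticRadiusSq_le_add hF hB b]

end AsymptoticRadius

section HadamardSpace

variable {H : Type*} [MetricSpace H] [CompleteSpace H]

/- The Bruhat–Tits inequality; as `m` does not depend on `z`, it passes to the `limsup`. -/
theorem HadamardSpace.exists_midpoint_dist_sq_le (hH : HadamardSpace H) (a b : H) :
    ∃ m, ∀ z, dist m z ^ 2 ≤ (dist a z ^ 2 + dist b z ^ 2) / 2 - dist a b ^ 2 / 4 := by
  obtain ⟨γ, hγ, rfl, rfl⟩ := hH.geodesic a b
  refine ⟨γ (1 / 2), fun z => ?_⟩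
  have hcat0 := hH.cat0 z γ hγ (1 / 2) (by norm_num)
  simp only [dist_comm z] at hcat0
  linarith

theorem HadamardSpace.stronglyMidpointConvexWith_asymptoticRadiusSq (hH : HadamardSpace H)
    {F : Filter H} [F.NeBot] (hF : Disjoint F (Bornology.cobounded H)) :
    StronglyMidpointConvexWith 1 (asymptoticRadiusSq F) := by
  intro a b
  obtain ⟨m, hm⟩ := hH.exists_midpoint_dist_sq_le a b
  refine ⟨m, le_of_forall_pos_le_add fun ε hε => asymptoticRadiusSq_le ?_⟩
  filter_upwards [eventually_dist_sq_lt_asymptoticRadiusSq_add hF a hε,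
    eventually_dist_sq_lt_asymptoticRadiusSq_add hF b hε] with z ha hb
  linarith [hm z]

end HadamardSpace

theorem exists_unique_asymptotic_center_general
    {H : Type*} [MetricSpace H] [CompleteSpace H] (hH : HadamardSpace H)
    {F : Filter H} [F.NeBot] (hF : Disjoint F (Bornology.cobounded H)) :
    ∃! c : H, ∀ y : H, asymptoticRadiusSq F c ≤ asymptoticRadiusSq F y := by
  have : Nonempty H := F.nonempty_of_neBot
  have hconvex := hH.stronglyMidpointConvexWith_asymptoticRadiusSq hF
  have hlsc := lowerSemicontinuous_asymptoticRadiusSq hF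
  have hbdd : BddBelow (Set.range (asymptoticRadiusSq F)) :=
    ⟨0, Set.forall_mem_range.2 (asymptoticRadiusSq_nonneg hF)⟩
  exact hconvex.existsUnique_forall_le one_pos hlsc hbdd

/-- In a Hadamard space, every bounded sequence has a unique asymptotic
center, i.e. the function `ω(y) = limsup_n d(y,x_n)²` has a unique minimizer. -/
theorem exists_unique_asymptotic_center
    {H : Type*} [MetricSpace H] [CompleteSpace H] (hH : HadamardSpace H)
    (x : ℕ → H) (hx : Bornology.IsBounded (Set.range x)) :
    ∃! c : H, IsAsymptoticCenter x c :=
  exists_unique_asymptotic_center_general hH (hx.disjoint_cobounded range_mem_map)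
end
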